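/- (Orthonormality of Krawtchouk polynomials.) Let 0 < γ < 1 and let M be a positive integer. For all integers 0 ≤ n, m ≤ M, ∑_{k=0}^{M} binom(M, k) · γ^k · (1−γ)^{M−k} · K_n^M(k; γ) · K_m^M(k; γ) = δ_{n,m}. -/

import Mathlib

open Finset

/-- The Pochhammer symbol `(a)ⱼ = a(a+1)⋯(a+j−1)`. -/
noncomputable def poch (a : ℝ) (j : ℕ) : ℝ := (ascPochhammer ℝ j).eval a

/-- The orthonormal Krawtchouk polynomial
`Kₙ^M(k; γ) = √(M!/(n!(M−n)!)) (γ/(1−γ))^{n/2}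
  ∑_{j=0}^{min(n,k)} (−n)ⱼ(−k)ⱼ/((−M)ⱼ j!) · γ^{−j}`. -/
noncomputable def krawtchouk (M : ℕ) (γ : ℝ) (n k : ℕ) : ℝ :=
  Real.sqrt ((Nat.factorial M : ℝ) /
      ((Nat.factorial n) * (Nat.factorial (M - n)))) *
    Real.rpow (γ / (1 - γ)) ((n : ℝ) / 2) *
    ∑ j ∈ range (min n k + 1),
      poch (-(n : ℝ)) j * poch (-(k : ℝ)) j /
        (poch (-(M : ℝ)) j * (Nat.factorial j)) * γ⁻¹ ^ j


/-- The Pochhammer symbol at a negative integer. -/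
lemma poch_neg (n j : ℕ) : poch (-(n : ℝ)) j = (-1) ^ j * (j.factorial * n.choose j) := by
  unfold poch
  rw [ascPochhammer_eval_neg_eq_descPochhammer, descPochhammer_eval_eq_descFactorial,
    Nat.descFactorial_eq_factorial_mul_choose]
  push_cast
  ring

/-- The hypergeometric sum, with a uniform range. -/
noncomputable def krS (M : ℕ) (γ : ℝ) (n k : ℕ) : ℝ :=
  ∑ j ∈ range (M + 1), (n.choose j : ℝ) * k.choose j / M.choose j * (-γ⁻¹) ^ j

lemma krS_eq (M : ℕ) (γ : ℝ) (n k : ℕ) (hn : n ≤ M) :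
    ∑ j ∈ range (min n k + 1),
      poch (-(n : ℝ)) j * poch (-(k : ℝ)) j /
        (poch (-(M : ℝ)) j * (Nat.factorial j)) * γ⁻¹ ^ j = krS M γ n k := by
  unfold krS
  have hsub : range (min n k + 1) ⊆ range (M + 1) := by
    apply range_subset_range.2
    have := min_le_left n k
    omega
  rw [← sum_subset hsub]
  · apply sum_congr rfl
    intro j hj
    have hjM : j ≤ M := by have := mem_range.1 (hsub hj); omega
    have h1 : (M.choose j : ℝ) ≠ 0 := by exact_mod_cast (Nat.choose_pos hjM).ne'
    have h2 : (j.factorial : ℝ) ≠ 0 := by exact_mod_cast j.factorial_ne_zero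
    have h3 : ((-1 : ℝ)) ^ j ≠ 0 := pow_ne_zero _ (by norm_num)
    rw [poch_neg, poch_neg, poch_neg, neg_pow γ⁻¹]
    field_simp
  · intro j _ hj
    have hj : min n k < j := by
      rw [mem_range] at hj
      omega
    rcases min_lt_iff.1 hj with h | h
    · simp [Nat.choose_eq_zero_of_lt h]
    · simp [Nat.choose_eq_zero_of_lt h]

lemma kr_inner_sum (M j : ℕ) (hj : j ≤ M) (t : ℝ) :
    ∑ n ∈ range (M + 1), (M.choose n : ℝ) * n.choose j * t ^ n
      = M.choose j * t ^ j * (1 + t) ^ (M - j) := by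
  obtain ⟨d, rfl⟩ := Nat.exists_eq_add_of_le hj
  rw [add_assoc, sum_range_add, sum_eq_zero, zero_add, add_comm 1 t, add_pow, mul_sum,
    Nat.add_sub_cancel_left]
  · apply sum_congr rfl
    intro i hi
    have hi : i ≤ d := by have := mem_range.1 hi; omega
    have h := Nat.choose_mul (n := j + d) (k := j + i) (s := j) (by omega)
    simp only [Nat.add_sub_cancel_left] at h
    have h' : ((j + d).choose (j + i) : ℝ) * (j + i).choose j
        = (j + d).choose j * d.choose i := by exact_mod_cast h
    rw [h', pow_add]
    ring
  · intro x hx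
    simp [Nat.choose_eq_zero_of_lt (mem_range.1 hx)]

lemma gen_fun (M : ℕ) (γ : ℝ) (k : ℕ) (hk : k ≤ M) (t : ℝ) :
    ∑ n ∈ range (M + 1), (M.choose n : ℝ) * krS M γ n k * t ^ n
      = (1 + t) ^ (M - k) * (1 + t - γ⁻¹ * t) ^ k := by
  have e : ∀ j ∈ range (M + 1),
      ∑ n ∈ range (M + 1), (M.choose n : ℝ) *
        ((n.choose j : ℝ) * k.choose j / M.choose j * (-γ⁻¹) ^ j) * t ^ n
      = k.choose j * (-γ⁻¹ * t) ^ j * (1 + t) ^ (M - j) := by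
    intro j hj
    have hjM : j ≤ M := by have := mem_range.1 hj; omega
    have h1 : (M.choose j : ℝ) ≠ 0 := by exact_mod_cast (Nat.choose_pos hjM).ne'
    have : ∀ n ∈ range (M + 1), (M.choose n : ℝ) *
        ((n.choose j : ℝ) * k.choose j / M.choose j * (-γ⁻¹) ^ j) * t ^ n
        = (k.choose j / M.choose j * (-γ⁻¹) ^ j) * ((M.choose n : ℝ) * n.choose j * t ^ n) := by
      intro n _
      ring
    rw [sum_congr rfl this, ← mul_sum, kr_inner_sum M j hjM, mul_pow]
    field_simp
  unfold krS
  simp_rw [mul_sum, sum_mul]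
  rw [sum_comm, sum_congr rfl e]
  have h2 : 1 + t - γ⁻¹ * t = -γ⁻¹ * t + (1 + t) := by ring
  have hsub : range (k + 1) ⊆ range (M + 1) := range_subset_range.2 (by omega)
  rw [h2, add_pow (-γ⁻¹ * t) (1 + t), mul_sum, ← sum_subset hsub]
  · apply sum_congr rfl
    intro j hj
    have hj : j ≤ k := by have := mem_range.1 hj; omega
    have : M - j = (M - k) + (k - j) := by omega
    rw [this, pow_add]
    ring
  · intro j _ hj
    have : k < j := by
      rw [mem_range] at hj
      omega
    simp [Nat.choose_eq_zero_of_lt this]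

lemma coeff_ext (M : ℕ) (c d : ℕ → ℝ)
    (h : ∀ t : ℝ, ∑ n ∈ range (M + 1), c n * t ^ n = ∑ n ∈ range (M + 1), d n * t ^ n)
    (n : ℕ) (hn : n ≤ M) : c n = d n := by
  have hp : (∑ n ∈ range (M + 1), Polynomial.monomial n (c n))
      = ∑ n ∈ range (M + 1), Polynomial.monomial n (d n) := by
    apply Polynomial.funext
    intro t
    simpa [Polynomial.eval_finsetSum, Polynomial.eval_monomial] using h t
  have := congrArg (fun p => Polynomial.coeff p n) hp
  simpa [Polynomial.finsetSum_coeff, Polynomial.coeff_monomial, Nat.lt_succ_iff, hn] using this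

/-- The weighted sum of the unnormalized polynomials. -/
noncomputable def krA (M : ℕ) (γ : ℝ) (n m : ℕ) : ℝ :=
  ∑ k ∈ range (M + 1), (Nat.choose M k : ℝ) * γ ^ k * (1 - γ) ^ (M - k) *
    (M.choose n * krS M γ n k) * (M.choose m * krS M γ m k)

lemma double_gen (M : ℕ) (γ : ℝ) (hγ : γ ≠ 0) (t s : ℝ) :
    ∑ n ∈ range (M + 1), (∑ m ∈ range (M + 1), krA M γ n m * s ^ m) * t ^ n
      = ∑ n ∈ range (M + 1), (M.choose n * ((1 - γ) / γ) ^ n * s ^ n) * t ^ n := by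
  have hR : ∑ n ∈ range (M + 1), ((M.choose n : ℝ) * ((1 - γ) / γ) ^ n * s ^ n) * t ^ n
      = ((1 - γ) / γ * s * t + 1) ^ M := by
    rw [add_pow]
    apply sum_congr rfl
    intro n _
    rw [mul_pow, mul_pow, one_pow]
    ring
  have hb : (1 - γ) / γ * s * t + 1 = γ * ((1 + t - γ⁻¹ * t) * (1 + s - γ⁻¹ * s))
      + (1 - γ) * ((1 + t) * (1 + s)) := by
    field_simp
    ring
  rw [hR, hb, add_pow]
  have hL : ∀ k ∈ range (M + 1),
      (γ * ((1 + t - γ⁻¹ * t) * (1 + s - γ⁻¹ * s))) ^ k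
        * ((1 - γ) * ((1 + t) * (1 + s))) ^ (M - k) * (M.choose k : ℝ)
      = ∑ n ∈ range (M + 1), ∑ m ∈ range (M + 1),
        (Nat.choose M k : ℝ) * γ ^ k * (1 - γ) ^ (M - k) *
        (M.choose n * krS M γ n k) * (M.choose m * krS M γ m k) * s ^ m * t ^ n := by
    intro k hk
    have hk : k ≤ M := by have := mem_range.1 hk; omega
    have : (γ * ((1 + t - γ⁻¹ * t) * (1 + s - γ⁻¹ * s))) ^ k
        * ((1 - γ) * ((1 + t) * (1 + s))) ^ (M - k) * (M.choose k : ℝ)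
        = (Nat.choose M k : ℝ) * γ ^ k * (1 - γ) ^ (M - k) *
          (((1 + t) ^ (M - k) * (1 + t - γ⁻¹ * t) ^ k)
            * ((1 + s) ^ (M - k) * (1 + s - γ⁻¹ * s) ^ k)) := by
      simp only [mul_pow]
      ring
    rw [this, ← gen_fun M γ k hk t, ← gen_fun M γ k hk s, sum_mul_sum, mul_sum]
    apply sum_congr rfl
    intro n _
    rw [mul_sum]
    apply sum_congr rfl
    intro m _
    ring
  rw [sum_congr rfl hL, sum_comm]
  apply sum_congr rfl
  intro n _
  rw [sum_comm, sum_mul]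
  apply sum_congr rfl
  intro m _
  unfold krA
  rw [sum_mul, sum_mul]

lemma krA_eq (M : ℕ) (γ : ℝ) (hγ : γ ≠ 0) (n m : ℕ) (hn : n ≤ M) (hm : m ≤ M) :
    krA M γ n m = if n = m then (M.choose n : ℝ) * ((1 - γ) / γ) ^ n else 0 := by
  have h1 : ∀ s : ℝ, ∑ m ∈ range (M + 1), krA M γ n m * s ^ m
      = ∑ m ∈ range (M + 1),
        (if n = m then (M.choose n : ℝ) * ((1 - γ) / γ) ^ n else 0) * s ^ m := by
    intro s
    rw [coeff_ext M _ _ (fun t => double_gen M γ hγ t s) n hn]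
    simp [ite_mul, Nat.lt_succ_iff, hn]
  exact coeff_ext M _ _ h1 m hm

theorem krawtchouk_orthonormal (γ : ℝ) (hγ0 : 0 < γ) (hγ1 : γ < 1)
    (M : ℕ) (hM : 1 ≤ M) (n m : ℕ) (hn : n ≤ M) (hm : m ≤ M) :
    ∑ k ∈ range (M + 1), (Nat.choose M k : ℝ) * γ ^ k * (1 - γ) ^ (M - k) *
        krawtchouk M γ n k * krawtchouk M γ m k =
      if n = m then (1 : ℝ) else 0 := by
  have hcn : (M.choose n : ℝ) ≠ 0 := by exact_mod_cast (Nat.choose_pos hn).ne'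
  have hcm : (M.choose m : ℝ) ≠ 0 := by exact_mod_cast (Nat.choose_pos hm).ne'
  have hq : 0 < γ / (1 - γ) := div_pos hγ0 (by linarith)
  have hA := krA_eq M γ hγ0.ne' n m hn hm
  have hK : ∀ n k, n ≤ M → krawtchouk M γ n k = Real.sqrt (M.choose n) *
      Real.rpow (γ / (1 - γ)) ((n : ℝ) / 2) * krS M γ n k := by
    intro n k hn
    unfold krawtchouk
    rw [krS_eq M γ n k hn, Nat.cast_choose ℝ hn]
  have hmain : ∑ k ∈ range (M + 1), (Nat.choose M k : ℝ) * γ ^ k * (1 - γ) ^ (M - k) *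
        krawtchouk M γ n k * krawtchouk M γ m k
      = (Real.sqrt (M.choose n) * Real.rpow (γ / (1 - γ)) ((n : ℝ) / 2) / M.choose n)
        * (Real.sqrt (M.choose m) * Real.rpow (γ / (1 - γ)) ((m : ℝ) / 2) / M.choose m)
        * krA M γ n m := by
    unfold krA
    rw [mul_sum]
    apply sum_congr rfl
    intro k _
    rw [hK n k hn, hK m k hm]
    field_simp
  rw [hmain, hA]
  split_ifs with h
  · subst h
    have hs : Real.sqrt (M.choose n) * Real.sqrt (M.choose n) = M.choose n :=
      Real.mul_self_sqrt (Nat.cast_nonneg _)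
    have hr : Real.rpow (γ / (1 - γ)) ((n : ℝ) / 2) * Real.rpow (γ / (1 - γ)) ((n : ℝ) / 2)
        = (γ / (1 - γ)) ^ n := by
      have := Real.rpow_add hq ((n : ℝ) / 2) ((n : ℝ) / 2)
      rw [add_halves, Real.rpow_natCast] at this
      exact this.symm
    have hi : (γ / (1 - γ)) ^ n * ((1 - γ) / γ) ^ n = 1 := by
      rw [← mul_pow, div_mul_div_comm, mul_comm, div_self, one_pow]
      exact mul_ne_zero (by linarith) hγ0.ne'
    generalize Real.rpow (γ / (1 - γ)) ((n : ℝ) / 2) = r at hr ⊢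
    calc _ = (Real.sqrt (M.choose n) * Real.sqrt (M.choose n)) * (r * r)
          * ((1 - γ) / γ) ^ n * ((M.choose n : ℝ) / (M.choose n * M.choose n)) := by ring
      _ = (M.choose n : ℝ) * ((γ / (1 - γ)) ^ n * ((1 - γ) / γ) ^ n)
          * ((M.choose n : ℝ) / (M.choose n * M.choose n)) := by rw [hs, hr]; ring
      _ = 1 := by rw [hi]; field_simp
  · simp
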